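/- arXiv:math/0304302 — 2 statements merged into one kernel-verified Lean document; each statement's English description precedes it below -/
import Mathlib

section
/- Let G be a finite group acting on a finite set X. Then (1/|G|) · ∑_{(g,h)∈G×G, gh=hg} |X^g ∩ X^h| = ∑_{[g]} |X^g / C(g)|, where the right-hand sum runs over the conjugacy classes [g] of G, X^g denotes the fixed-point set of g, C(g) denotes the centralizer of g in G (which acts on X^g), and X^g/C(g) is the set of C(g)-orbits on X^g. -/
/-!
Let `G` act on the set `Λ = {(g, x) | g • x = x}` by `k • (g, x) = (k * g * k⁻¹, k • x)`. Both sides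
of the identity count the orbits of `G` on `Λ`.

* A pair `(g, x) ∈ Λ` is fixed by `h` exactly when `h` commutes with `g` and fixes `x`, so
  Burnside's lemma for `Λ` gives the normalized sum over commuting pairs.
* The projection `(g, x) ↦ g` sends orbits on `Λ` to conjugacy classes. Every orbit over the class
  of `g` has a representative `(g, x)` with `x ∈ X^g`, and `(g, x)`, `(g, y)` lie in the same orbit
  exactly when some `k ∈ C(g)` moves `x` to `y`; so the orbits over that class form `X^g / C(g)`.
-/

open MulAction

theorem card_range_eq_of_ker_eq {α β γ : Type*} {f₁ : α → β} {f₂ : α → γ}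
    (h : Setoid.ker f₁ = Setoid.ker f₂) : Nat.card (Set.range f₁) = Nat.card (Set.range f₂) :=
  Nat.card_congr <| (Setoid.quotientKerEquivRange f₁).symm.trans <|
    (Quotient.congrRight fun _ _ ↦ by rw [h]).trans (Setoid.quotientKerEquivRange f₂)

open scoped Pointwise in
theorem smul_mem_fixedBy_conj {G X : Type*} [Group G] [MulAction G X] {g : G} {x : X} (k : G)
    (hx : x ∈ fixedBy X g) : k • x ∈ fixedBy X (k * g * k⁻¹) :=
  smul_fixedBy X g k ▸ Set.smul_mem_smul_set hx

/-- The set of pairs `(g, x)` with `g • x = x`, i.e. the objects of the inertia groupoid of the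
action of `G` on `X`. Its orbits under `k • (g, x) = (k * g * k⁻¹, k • x)` are what both forms of
the orbifold Euler characteristic count. -/
@[ext]
structure InertiaSet (G X : Type*) [Group G] [MulAction G X] where
  elem : G
  point : X
  point_mem : point ∈ fixedBy X elem

namespace InertiaSet

variable {G X : Type*} [Group G] [MulAction G X]

instance [Finite G] [Finite X] : Finite (InertiaSet G X) :=
  Finite.of_injective (fun p ↦ (p.elem, p.point)) fun _ _ h ↦
    InertiaSet.ext (congrArg Prod.fst h) (congrArg Prod.snd h)

instance : MulAction G (InertiaSet G X) where
  smul k p := ⟨k * p.elem * k⁻¹, k • p.point, smul_mem_fixedBy_conj k p.point_mem⟩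
  one_smul p := InertiaSet.ext (by change 1 * p.elem * 1⁻¹ = p.elem; group) (one_smul G p.point)
  mul_smul k l p := InertiaSet.ext
    (by change k * l * p.elem * (k * l)⁻¹ = k * (l * p.elem * l⁻¹) * k⁻¹; group)
    (mul_smul k l p.point)

theorem smul_eq_iff {k : G} {p q : InertiaSet G X} :
    k • p = q ↔ k * p.elem * k⁻¹ = q.elem ∧ k • p.point = q.point :=
  InertiaSet.ext_iff

theorem mem_fixedBy_iff {h : G} {p : InertiaSet G X} :
    p ∈ fixedBy (InertiaSet G X) h ↔ p.elem * h = h * p.elem ∧ p.point ∈ fixedBy X h := by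
  rw [mem_fixedBy, smul_eq_iff, mul_inv_eq_iff_eq_mul, mem_fixedBy, eq_comm (a := h * _)]

/-- The pairs `(g, x)` fixed by `h`, sorted by their first component. The fibre over `g` is empty
unless `g` and `h` commute, and is `X^g ∩ X^h` if they do. -/
def fixedByEquivSigma (h : G) : fixedBy (InertiaSet G X) h ≃
    Σ g : G, {x : X // g * h = h * g ∧ x ∈ fixedBy X g ∩ fixedBy X h} where
  toFun p := ⟨p.1.elem, p.1.point, (mem_fixedBy_iff.1 p.2).1, p.1.point_mem,
    (mem_fixedBy_iff.1 p.2).2⟩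
  invFun q := ⟨⟨q.1, q.2.1, q.2.2.2.1⟩, mem_fixedBy_iff.2 ⟨q.2.2.1, q.2.2.2.2⟩⟩
  left_inv _ := rfl
  right_inv _ := rfl

theorem card_fixedBy [Fintype G] [DecidableEq G] [Finite X] (h : G) :
    Nat.card (fixedBy (InertiaSet G X) h) =
      ∑ g : G, if g * h = h * g then (fixedBy X g ∩ fixedBy X h).ncard else 0 := by
  rw [Nat.card_congr (fixedByEquivSigma h), Nat.card_sigma]
  refine Finset.sum_congr rfl fun g _ ↦ ?_
  split_ifs with hgh
  · simp only [hgh, true_and]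
    exact Nat.card_coe_set_eq _
  · simp only [hgh, false_and, Nat.card_of_isEmpty]

theorem sum_ncard_fixedBy_inter_eq_card_orbits_mul_card_group
    [Fintype G] [DecidableEq G] [Finite X] :
    (∑ p : G × G, if p.1 * p.2 = p.2 * p.1 then (fixedBy X p.1 ∩ fixedBy X p.2).ncard else 0) =
      Nat.card (orbitRel.Quotient G (InertiaSet G X)) * Nat.card G := by
  simp_rw [Fintype.sum_prod_type_right, ← card_fixedBy]
  rw [← Nat.card_sigma, Nat.card_congr (sigmaFixedByEquivOrbitsProdGroup G (InertiaSet G X)),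
    Nat.card_prod]

/-- The conjugacy class lying under an orbit of pairs `(g, x)`, namely that of `g`. -/
def conjClass : orbitRel.Quotient G (InertiaSet G X) → ConjClasses G :=
  Quotient.lift (fun p ↦ ConjClasses.mk p.elem) fun _ _ ⟨k, hk⟩ ↦
    (ConjClasses.mk_eq_mk_iff_isConj.2 <| isConj_iff.2 ⟨k, (smul_eq_iff.1 hk).1⟩).symm

/-- The orbit of the pair `(g, x)`, as a function of `x ∈ X^g`; it parametrizes the orbits lying
over the conjugacy class of `g`. -/
def orbitOver (g : G) (x : fixedBy X g) : orbitRel.Quotient G (InertiaSet G X) :=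
  Quotient.mk _ ⟨g, x, x.2⟩

theorem range_orbitOver (g : G) :
    Set.range (orbitOver (X := X) g) = {o | conjClass o = ConjClasses.mk g} := by
  ext o
  constructor
  · rintro ⟨x, rfl⟩
    rfl
  · induction o using Quotient.inductionOn with | _ p =>
    intro hp
    obtain ⟨k, hk⟩ := isConj_iff.1 (ConjClasses.mk_eq_mk_iff_isConj.1 hp)
    exact ⟨⟨k • p.point, hk ▸ smul_mem_fixedBy_conj k p.point_mem⟩,
      Quotient.sound ⟨k, smul_eq_iff.2 ⟨hk, rfl⟩⟩⟩

theorem orbitOver_eq_iff {g : G} {x y : fixedBy X g} :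
    orbitOver g x = orbitOver g y ↔ orbitRel (Subgroup.centralizer {g}) X x y := by
  rw [orbitOver, orbitOver, Quotient.eq, orbitRel_apply, orbitRel_apply]
  simp only [mem_orbit_iff, smul_eq_iff, Subtype.exists, Subgroup.mem_centralizer_singleton_iff,
    Subgroup.mk_smul, mul_inv_eq_iff_eq_mul, exists_prop]

theorem card_conjClass_eq (g : G) :
    Nat.card {o : orbitRel.Quotient G (InertiaSet G X) // conjClass o = ConjClasses.mk g} =
      (Quotient.mk (orbitRel (Subgroup.centralizer {g}) X) '' fixedBy X g).ncard := by
  rw [← Set.coe_ofPred, ← range_orbitOver, Set.image_eq_range, ← Nat.card_coe_set_eq]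
  exact card_range_eq_of_ker_eq <| Setoid.ext fun _ _ ↦ orbitOver_eq_iff.trans Quotient.eq.symm

theorem card_orbits_eq_finsum [Finite G] [Finite X] :
    Nat.card (orbitRel.Quotient G (InertiaSet G X)) = ∑ᶠ c : ConjClasses G,
      (Quotient.mk (orbitRel (Subgroup.centralizer {c.out}) X) '' fixedBy X c.out).ncard := by
  have := Fintype.ofFinite (ConjClasses G)
  rw [finsum_eq_sum_of_fintype, ← Nat.card_congr (Equiv.sigmaFiberEquiv conjClass), Nat.card_sigma]
  refine Finset.sum_congr rfl fun c _ ↦ ?_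
  have mk_out : ConjClasses.mk c.out = c := Quotient.out_eq c
  rw [← card_conjClass_eq, mk_out]

end InertiaSet

/- The quotient `X^g / C(g)` is encoded as the image of the fixed-point set
`X^g = MulAction.fixedBy X g` in the orbit space `X / C(g)` of the action of the
centralizer `C(g) = Subgroup.centralizer {g}` on `X`; since `X^g` is stable under
`C(g)`, this image is in bijection with the set of `C(g)`-orbits on `X^g`. -/
theorem orbifold_euler_characteristic_conj_classes
    (G X : Type*) [Group G] [Fintype G] [DecidableEq G] [Fintype X] [MulAction G X] :
    (1 / (Nat.card G : ℚ)) *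
        ∑ p : G × G,
          (if p.1 * p.2 = p.2 * p.1 then
            ((MulAction.fixedBy X p.1 ∩ MulAction.fixedBy X p.2).ncard : ℚ)
          else 0) =
      ∑ᶠ c : ConjClasses G,
        ((Quotient.mk (MulAction.orbitRel (Subgroup.centralizer {Quotient.out c}) X) ''
              MulAction.fixedBy X (Quotient.out c)).ncard : ℚ) := by
  have card_ne_zero : (Nat.card G : ℚ) ≠ 0 := Nat.cast_ne_zero.2 Nat.card_pos.ne'
  calc
    _ = 1 / (Nat.card G : ℚ) *
        (Nat.card (orbitRel.Quotient G (InertiaSet G X)) * Nat.card G) := by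
      congr 1
      exact_mod_cast InertiaSet.sum_ncard_fixedBy_inter_eq_card_orbits_mul_card_group
    _ = Nat.card (orbitRel.Quotient G (InertiaSet G X)) := by field_simp
    _ = _ := by rw [InertiaSet.card_orbits_eq_finsum, Nat.cast_finsum]
end

section
/- Let X be a set, let n ≥ 1, and let σ ∈ G_n be a permutation of cycle type α = (1^{a_1}, 2^{a_2}, …, n^{a_n}) (i.e. with a_i cycles of length i), acting on X^n by permuting coordinates. The centralizer C(σ) of σ in the symmetric group G_n acts on the fixed-point set (X^n)^σ, and the quotient (X^n)^σ / C(σ) is in natural bijection with the product ∏_{i=1}^{n} X^{(a_i)} of symmetric powers, where X^{(m)} := X^m / G_m denotes the m-th symmetric power of X. In particular, if X is a finite set with |X| = e, then |(X^n)^σ / C(σ)| = ∏_{i=1}^n C(e+a_i-1, a_i), where C(·,·) is the binomial coefficient. -/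
/- STATEMENT 4: Let `σ` be a permutation of `{1,…,n}` of cycle type
`α = (1^{a_1},…,n^{a_n})`, i.e. with `a i` cycles (orbits of the subgroup generated by
`σ`, fixed points counted as cycles of length 1) of length `i`, acting on `X^n` by
permuting coordinates (`arrowAction`: `(σ • x) i = x (σ⁻¹ i)`).  The quotient
`(X^n)^σ / C(σ)` of the fixed-point set by the centralizer `C(σ)` — encoded as the
image of `(X^n)^σ` in the orbit space of the action of `C(σ) = Subgroup.centralizer {σ}`
on `X^n`, which is in bijection with the set of `C(σ)`-orbits on `(X^n)^σ` since the
fixed-point set is `C(σ)`-stable — is in bijection with `∏_{i=1}^n X^{(a_i)}`, where the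
`m`-th symmetric power `X^{(m)} = X^m/G_m` is modelled by `Sym X m`.  In particular, if
`X` is finite with `|X| = e` then the cardinality is `∏_{i=1}^n C(e+a_i-1, a_i)`. -/

attribute [local instance] arrowAction

/-!
A `σ`-fixed tuple is a function on the set of cycles of `σ`. The centralizer of `σ` permutes the
cycles, and the permutations of the set of cycles that arise are exactly those preserving the
length: a length-preserving permutation `p` lifts to `σ ^ k • r_c ↦ σ ^ k • r_(p c)`, where `r_c`
is a chosen point of the cycle `c`. Hence an orbit of fixed tuples amounts to one multiset of
values for each cycle length.
-/

open MulAction Equiv Function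

section SymmetricPowers

variable {S Q L X ι : Type*}

/-- The unordered family of values of `f`, as a point of the symmetric power of `X` whose exponent
is the number of indices. -/
noncomputable def valueSym [Finite S] (f : S → X) : Sym X (Nat.card S) :=
  letI := Fintype.ofFinite S
  ⟨Finset.univ.val.map f, by rw [Multiset.card_map, Nat.card_eq_fintype_card]; rfl⟩

theorem valueSym_eq_iff_exists_perm [Finite S] {f g : S → X} :
    valueSym f = valueSym g ↔ ∃ π : Perm S, f = g ∘ π := by
  classical
  let := Fintype.ofFinite S
  refine Subtype.ext_iff.trans ⟨fun h => ?_, ?_⟩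
  · have card_fiber_eq (x : X) : Fintype.card {s // f s = x} = Fintype.card {s // g s = x} := by
      have count_eq := congrArg (Multiset.count x) h
      simp only [valueSym, Multiset.count_map, eq_comm (a := x)] at count_eq
      rw [Fintype.card_subtype, Fintype.card_subtype]
      exact count_eq
    let fiberEquiv (x : X) := Fintype.equivOfCardEq (card_fiber_eq x)
    exact ⟨ofFiberEquiv fiberEquiv, funext fun s => (ofFiberEquiv_map fiberEquiv s).symm⟩
  · rintro ⟨π, rfl⟩
    simp only [valueSym]
    rw [← Multiset.map_map, Multiset.map_univ_val_equiv]

theorem valueSym_surjective [Finite S] : Surjective (valueSym : (S → X) → Sym X (Nat.card S)) := by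
  rintro ⟨s, hs⟩
  let := Fintype.ofFinite S
  have length_eq : Fintype.card S = s.toList.length := by
    rw [Multiset.length_toList, hs, Nat.card_eq_fintype_card]
  let e : S ≃ Fin s.toList.length := Fintype.equivFinOfCardEq length_eq
  refine ⟨s.toList.get ∘ e, Subtype.ext ?_⟩
  calc Finset.univ.val.map (s.toList.get ∘ e)
      = Finset.univ.val.map s.toList.get := by
        rw [← Multiset.map_map, Multiset.map_univ_val_equiv]
    _ = (List.ofFn s.toList.get : Multiset X) := by rw [Fin.univ_def, List.ofFn_eq_map]; rfl
    _ = s := by rw [List.ofFn_get, Multiset.coe_toList]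

/-- The unordered families of values of `z : Q → X` on the fibers of a colouring `κ : Q → L`. -/
noncomputable def fiberValueSym (κ : Q → L) [∀ l, Finite {c // κ c = l}] (z : Q → X) (l : L) :
    Sym X (Nat.card {c // κ c = l}) :=
  valueSym fun c : {c // κ c = l} => z c

theorem fiberValueSym_eq_iff_exists_perm (κ : Q → L) [∀ l, Finite {c // κ c = l}] {z w : Q → X} :
    fiberValueSym κ z = fiberValueSym κ w ↔ ∃ p : Perm Q, (∀ c, κ (p c) = κ c) ∧ z = w ∘ p := by
  simp only [funext_iff (f := fiberValueSym κ z), fiberValueSym, valueSym_eq_iff_exists_perm]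
  constructor
  · intro h
    choose π hπ using h
    exact ⟨ofFiberEquiv π, ofFiberEquiv_map π, funext fun c => congrFun (hπ (κ c)) ⟨c, rfl⟩⟩
  · rintro ⟨p, hp, rfl⟩ l
    exact ⟨p.subtypePerm fun c => by rw [hp], rfl⟩

theorem fiberValueSym_surjective (κ : Q → L) [∀ l, Finite {c // κ c = l}] :
    Surjective (fiberValueSym κ : (Q → X) → ∀ l, Sym X (Nat.card {c // κ c = l})) := by
  intro s
  choose f hf using fun l => valueSym_surjective (s l)
  refine ⟨fun c => f (κ c) ⟨c, rfl⟩, funext fun l => ?_⟩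
  rw [← hf l]
  refine congrArg valueSym (funext ?_)
  rintro ⟨c, rfl⟩
  rfl

theorem bijective_pi_comp_of_injective {β : L → Type*} {k : ι → L} (hk : Injective k)
    (hβ : ∀ l ∉ Set.range k, Nonempty (Unique (β l))) :
    Bijective fun (s : ∀ l, β l) (i : ι) => s (k i) := by
  refine ⟨fun s t h => funext fun l => ?_, fun t => ?_⟩
  · by_cases hl : l ∈ Set.range k
    · obtain ⟨i, rfl⟩ := hl
      exact congrFun h i
    · obtain ⟨_⟩ := hβ l hl
      exact Subsingleton.elim _ _
  · have exists_value (l : L) : ∃ y : β l, ∀ (i : ι) (h : k i = l), h ▸ t i = y := by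
      by_cases hl : l ∈ Set.range k
      · obtain ⟨i, rfl⟩ := hl
        exact ⟨t i, fun j h => by obtain rfl := hk h; rfl⟩
      · obtain ⟨_⟩ := hβ l hl
        exact ⟨default, fun i h => absurd ⟨i, h⟩ hl⟩
    choose s hs using exists_value
    exact ⟨s, funext fun i => (hs (k i) i rfl).symm⟩

theorem card_pi_sym [Fintype ι] [Finite X] (b : ι → ℕ) :
    Nat.card (∀ i, Sym X (b i)) = ∏ i, (Nat.card X + b i - 1).choose (b i) := by
  classical
  let := Fintype.ofFinite X
  rw [Nat.card_pi]
  simp only [Nat.card_eq_fintype_card, Sym.card_sym_eq_choose]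

theorem prod_fin_add_one_eq_prod_Icc {M : Type*} [CommMonoid M] (f : ℕ → M) (n : ℕ) :
    ∏ i : Fin n, f (i + 1) = ∏ i ∈ Finset.Icc 1 n, f i := by
  rw [Fin.prod_univ_eq_prod_range (fun i => f (i + 1)), Finset.range_eq_Ico,
    Finset.prod_Ico_add', zero_add, Finset.Ico_add_one_right_eq_Icc]

end SymmetricPowers

section Cycles

variable {α X : Type*} {σ : Perm α}

/-- The set of cycles of `σ`, including the fixed points as cycles of length one. -/
abbrev CycleQuotient (σ : Perm α) : Type _ :=
  Quotient (orbitRel (Subgroup.zpowers σ) α)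

namespace CycleQuotient

/-- The cycle of `σ` through a point. -/
abbrev mk (σ : Perm α) (j : α) : CycleQuotient σ :=
  Quotient.mk (orbitRel (Subgroup.zpowers σ) α) j

/-- The number of points on a cycle; an infinite cycle gets length `0`. -/
noncomputable def length (c : CycleQuotient σ) : ℕ :=
  Nat.card {j // mk σ j = c}

/-- The number `a_i` of cycles of `σ` of length `i`. -/
noncomputable def count (σ : Perm α) (i : ℕ) : ℕ :=
  Nat.card {c : CycleQuotient σ // c.length = i}

theorem mk_eq_mk_iff_sameCycle {i j : α} : mk σ i = mk σ j ↔ σ.SameCycle i j := by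
  rw [eq_comm, Quotient.eq, orbitRel_apply, mem_orbit_iff, Subgroup.exists_zpowers]
  rfl

theorem mk_zpow_apply (k : ℤ) (j : α) : mk σ ((σ ^ k) j) = mk σ j :=
  mk_eq_mk_iff_sameCycle.2 (Perm.sameCycle_zpow_left.2 (Perm.SameCycle.refl σ j))

theorem mk_zpow_out (k : ℤ) (c : CycleQuotient σ) : mk σ ((σ ^ k) c.out) = c :=
  (mk_zpow_apply k c.out).trans c.out_eq

theorem exists_zpow_out_mk_eq (j : α) : ∃ k : ℤ, (σ ^ k) (mk σ j).out = j :=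
  mk_eq_mk_iff_sameCycle.1 (mk σ j).out_eq

theorem length_mk_eq_minimalPeriod (j : α) : (mk σ j).length = minimalPeriod (σ • ·) j := by
  rw [← Nat.card_zmod (minimalPeriod (σ • ·) j), ← Nat.card_congr (orbitZPowersEquiv σ j)]
  exact Nat.card_congr (subtypeEquivRight fun i => Quotient.eq.trans orbitRel_apply)

theorem zpow_out_eq_zpow_out_iff (c : CycleQuotient σ) (k l : ℤ) :
    (σ ^ k) c.out = (σ ^ l) c.out ↔ (c.length : ℤ) ∣ k - l := by
  have length_eq : c.length = minimalPeriod (σ • ·) c.out := by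
    rw [← length_mk_eq_minimalPeriod, mk, c.out_eq]
  rw [length_eq, ← zpow_smul_eq_iff_minimalPeriod_dvd, sub_eq_neg_add, zpow_add, zpow_neg, mul_smul,
    inv_smul_eq_iff]
  rfl

section Finite

variable [Finite α]

theorem length_pos (c : CycleQuotient σ) : 0 < c.length :=
  have : Nonempty {j // mk σ j = c} := ⟨c.out, c.out_eq⟩
  Nat.card_pos

theorem length_le_card (c : CycleQuotient σ) : c.length ≤ Nat.card α :=
  Finite.card_subtype_le _

theorem count_eq_zero_of_notMem_Icc {i : ℕ} (hi : i ∉ Set.Icc 1 (Nat.card α)) :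
    count σ i = 0 := by
  have : IsEmpty {c : CycleQuotient σ // c.length = i} :=
    ⟨fun ⟨c, hc⟩ => hi (hc ▸ ⟨c.length_pos, c.length_le_card⟩)⟩
  exact Nat.card_of_isEmpty

theorem bijective_restrict_pi_sym_count (X : Type*) {n : ℕ} (hn : Nat.card α ≤ n) :
    Bijective fun (s : ∀ i, Sym X (count σ i)) (i : Fin n) => s (i + 1) := by
  refine bijective_pi_comp_of_injective (k := fun i : Fin n => (i : ℕ) + 1)
    (fun i j h => Fin.ext (Nat.succ_injective h)) fun l hl => ?_
  have count_eq_zero : count σ l = 0 := count_eq_zero_of_notMem_Icc fun ⟨one_le, le_card⟩ =>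
    hl ⟨⟨l - 1, by lia⟩, Nat.sub_add_cancel one_le⟩
  rw [count_eq_zero]
  exact ⟨inferInstance⟩

end Finite

theorem exists_map_zpow_out_eq {p : CycleQuotient σ → CycleQuotient σ}
    (hp : ∀ c, (p c).length ∣ c.length) :
    ∃ t : α → α, ∀ c (k : ℤ), t ((σ ^ k) c.out) = (σ ^ k) (p c).out := by
  choose k hk using exists_zpow_out_mk_eq (σ := σ)
  refine ⟨fun j => (σ ^ k j) (p (mk σ j)).out, fun c l => ?_⟩
  have same_point := hk ((σ ^ l) c.out)
  rw [mk_zpow_out, zpow_out_eq_zpow_out_iff] at same_point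
  beta_reduce
  rw [mk_zpow_out, zpow_out_eq_zpow_out_iff]
  exact (Int.natCast_dvd_natCast.2 (hp c)).trans same_point

theorem exists_commute_of_length_eq {p : Perm (CycleQuotient σ)}
    (hp : ∀ c, (p c).length = c.length) :
    ∃ τ : Perm α, Commute τ σ ∧ ∀ j, mk σ (τ j) = p (mk σ j) := by
  obtain ⟨t, ht⟩ := exists_map_zpow_out_eq fun c => (hp c).dvd
  obtain ⟨u, hu⟩ := exists_map_zpow_out_eq (p := p.symm) fun c => by
    rw [← hp (p.symm c), p.apply_symm_apply]
  have eq_zpow_out (j : α) : ∃ c, ∃ k : ℤ, (σ ^ k) (Quotient.out c) = j :=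
    ⟨mk σ j, exists_zpow_out_mk_eq j⟩
  refine ⟨⟨t, u, fun j => ?_, fun j => ?_⟩, Perm.ext fun j => ?_, fun j => ?_⟩ <;>
    obtain ⟨c, k, rfl⟩ := eq_zpow_out j
  · rw [ht, hu, p.symm_apply_apply]
  · rw [hu, ht, p.apply_symm_apply]
  · change t (σ ((σ ^ k) c.out)) = σ (t ((σ ^ k) c.out))
    rw [ht, ← Perm.mul_apply, ← Perm.mul_apply, ← zpow_one_add, ht]
  · change mk σ (t ((σ ^ k) c.out)) = _
    rw [ht, mk_zpow_out, mk_zpow_out]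

theorem mk_apply_eq_mk_apply_iff_of_commute {τ : Perm α} (hτ : Commute τ σ) {i j : α} :
    mk σ (τ i) = mk σ (τ j) ↔ mk σ i = mk σ j := by
  have conj_eq : τ * σ * τ⁻¹ = σ := by rw [hτ.eq, mul_inv_cancel_right]
  rw [mk_eq_mk_iff_sameCycle, mk_eq_mk_iff_sameCycle]
  conv_lhs => rw [← conj_eq]
  rw [Perm.sameCycle_conj, Perm.inv_def, symm_apply_apply, symm_apply_apply]

theorem exists_perm_length_eq_of_commute {τ : Perm α} (hτ : Commute τ σ) :
    ∃ p : Perm (CycleQuotient σ), (∀ c, (p c).length = c.length) ∧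
      ∀ j, mk σ (τ j) = p (mk σ j) := by
  let p : Perm (CycleQuotient σ) := Quotient.congr τ fun i j => by
    rw [← Quotient.eq, ← Quotient.eq]
    exact (mk_apply_eq_mk_apply_iff_of_commute hτ).symm
  refine ⟨p, fun c => (Nat.card_congr (τ.subtypeEquiv fun j => ?_)).symm, fun j => rfl⟩
  exact p.injective.eq_iff.symm

theorem exists_commute_comp_mk_iff {z w : CycleQuotient σ → X} :
    (∃ τ : Perm α, Commute τ σ ∧ z ∘ mk σ = (w ∘ mk σ) ∘ τ) ↔
      ∃ p : Perm (CycleQuotient σ), (∀ c, (p c).length = c.length) ∧ z = w ∘ p := by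
  constructor
  · rintro ⟨τ, hτ, hzw⟩
    obtain ⟨p, hp, hpτ⟩ := exists_perm_length_eq_of_commute hτ
    refine ⟨p, hp, Quotient.mk_surjective.injective_comp_right (hzw.trans (funext fun j => ?_))⟩
    exact congrArg w (hpτ j)
  · rintro ⟨p, hp, rfl⟩
    obtain ⟨τ, hτ, hpτ⟩ := exists_commute_of_length_eq hp
    exact ⟨τ, hτ, funext fun j => congrArg w (hpτ j).symm⟩

end CycleQuotient

theorem fixedBy_arrow_eq_range_comp_mk :
    fixedBy (α → X) σ = Set.range fun z : CycleQuotient σ → X => z ∘ CycleQuotient.mk σ := by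
  ext x
  constructor
  · intro hx
    have apply_smul (g : Subgroup.zpowers σ) (i : α) : x (g • i) = x i := by
      have inv_fixes : (g : Perm α)⁻¹ • x = x :=
        inv_mem (Subgroup.zpowers_le.2 (show σ ∈ stabilizer (Perm α) x from hx) g.2)
      calc x (g • i) = ((g : Perm α)⁻¹ • x) i := congrArg x (by rw [inv_inv]; rfl)
        _ = x i := congrFun inv_fixes i
    refine ⟨fun c => Quotient.liftOn c x ?_, rfl⟩
    rintro _ i ⟨g, rfl⟩
    exact apply_smul g i
  · rintro ⟨z, rfl⟩
    exact funext fun j => congrArg z (CycleQuotient.mk_zpow_apply (-1) j)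

theorem mk_orbitRel_centralizer_eq_iff {x y : α → X} :
    Quotient.mk (orbitRel (Subgroup.centralizer {σ}) (α → X)) x = Quotient.mk _ y ↔
      ∃ τ : Perm α, Commute τ σ ∧ x = y ∘ τ := by
  rw [Quotient.eq, orbitRel_apply, mem_orbit_iff]
  constructor
  · rintro ⟨⟨τ, hτ⟩, rfl⟩
    exact ⟨τ⁻¹, Subgroup.mem_centralizer_singleton_iff.1 (inv_mem hτ), rfl⟩
  · rintro ⟨τ, hτ, rfl⟩
    exact ⟨⟨τ⁻¹, inv_mem (Subgroup.mem_centralizer_singleton_iff.2 hτ)⟩, rfl⟩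

end Cycles

theorem fixed_point_quotient_equiv_symmetric_powers_general
    (X : Type*) {α : Type*} (σ : Perm α)
    [∀ i, Finite {c : CycleQuotient σ // c.length = i}] :
    Nonempty
      ((Quotient.mk (orbitRel (Subgroup.centralizer {σ}) (α → X)) '' fixedBy (α → X) σ : Set _) ≃
        (∀ i, Sym X (CycleQuotient.count σ i))) := by
  let toOrbit (z : CycleQuotient σ → X) :=
    Quotient.mk (orbitRel (Subgroup.centralizer {σ}) (α → X)) (z ∘ CycleQuotient.mk σ)
  let toSym (z : CycleQuotient σ → X) := fiberValueSym CycleQuotient.length z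
  have toOrbit_eq_iff (z w) : toOrbit z = toOrbit w ↔ toSym z = toSym w :=
    mk_orbitRel_centralizer_eq_iff.trans <| CycleQuotient.exists_commute_comp_mk_iff.trans
      (fiberValueSym_eq_iff_exists_perm _).symm
  rw [fixedBy_arrow_eq_range_comp_mk, ← Set.range_comp]
  exact ⟨(Setoid.quotientKerEquivRange toOrbit).symm.trans <|
    (Quotient.congrRight toOrbit_eq_iff).trans <|
      Setoid.quotientKerEquivOfSurjective toSym (fiberValueSym_surjective _)⟩

theorem fixed_point_quotient_equiv_symmetric_powers
    (X : Type*) (n : ℕ) (hn : 1 ≤ n) (σ : Equiv.Perm (Fin n)) (a : ℕ → ℕ)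
    (ha : ∀ i : ℕ,
      a i =
        Nat.card
          {c : Quotient (MulAction.orbitRel (Subgroup.zpowers σ) (Fin n)) //
            Nat.card
                {j : Fin n //
                  Quotient.mk (MulAction.orbitRel (Subgroup.zpowers σ) (Fin n)) j = c} =
              i}) :
    Nonempty
        ((Quotient.mk (MulAction.orbitRel (Subgroup.centralizer {σ}) (Fin n → X)) ''
            MulAction.fixedBy (Fin n → X) σ : Set _) ≃
          ((i : Fin n) → Sym X (a ((i : ℕ) + 1)))) ∧
      (∀ e : ℕ, Finite X → Nat.card X = e →
        (Quotient.mk (MulAction.orbitRel (Subgroup.centralizer {σ}) (Fin n → X)) ''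
              MulAction.fixedBy (Fin n → X) σ).ncard =
          ∏ i ∈ Finset.Icc 1 n, (e + a i - 1).choose (a i)) := by
  obtain rfl : a = CycleQuotient.count σ := funext ha
  obtain ⟨orbitsEquiv⟩ := fixed_point_quotient_equiv_symmetric_powers_general X σ
  let e := orbitsEquiv.trans <| ofBijective _ <|
    CycleQuotient.bijective_restrict_pi_sym_count X (Nat.card_fin n).le
  refine ⟨⟨e⟩, ?_⟩
  rintro _ _ rfl
  rw [← Nat.card_coe_set_eq, Nat.card_congr e, card_pi_sym]
  exact prod_fin_add_one_eq_prod_Icc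
    (fun i => (Nat.card X + CycleQuotient.count σ i - 1).choose (CycleQuotient.count σ i)) n
end
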